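/- arXiv:math/0507500 — 2 statements merged into one kernel-verified Lean document; each statement's English description precedes it below -/
import Mathlib

section
/- Let P ⊆ ℝ^n be an n-dimensional reflexive polytope with respect to ℤ^n, and let x, y be an orthogonal pair of roots of P, i.e., lattice points in the relative interiors of facets F_x, F_y with ⟨η_x, y⟩ = 0 = ⟨η_y, x⟩. Then x + y is a lattice point lying in F_x ∩ F_y. -/
/-!
Write `P*` as the convex hull of a finite set `V` of lattice points. If `w ∈ V` takes the value `-1`
at the root `x`, then, `x` being relatively interior to `Fₓ`, it is constantly `-1` on `Fₓ`
(`eq_neg_one_of_mem_intrinsicInterior`), and since `Fₓ` spans `ℝ^n` linearly this forces `w = ηₓ`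
(`ext_on_facet`, `eq_normal`). By integrality every other `w ∈ V` satisfies `⟨w, x⟩ ≥ 0`, and
likewise for `y`. Together with the orthogonality relations this gives `⟨w, x + y⟩ ≥ -1` for all
`w ∈ V`, so `x + y ∈ P** = P` by Hahn–Banach (`mem_of_forall_dual`).

Finally, a functional exposing `Fₓ` is constant on `Fₓ`, hence a multiple of `ηₓ`; as
`⟨ηₓ, x + y⟩ = -1 = ⟨ηₓ, x⟩`, the point `x + y` of `P` lies in `Fₓ` (`mem_facet`). The situation is
symmetric in `x` and `y`.
-/

/-- The standard pairing `⟨x, y⟩ = ∑ i, x i * y i` on `ℝ^n`. -/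
def dotProd {n : ℕ} (x y : Fin n → ℝ) : ℝ := ∑ i, x i * y i

/-- A point of `ℝ^n` is a lattice point if all its coordinates are integers. -/
def IsLatticePt {n : ℕ} (x : Fin n → ℝ) : Prop := ∀ i, ∃ m : ℤ, x i = (m : ℝ)

/-- A lattice polytope is the convex hull of finitely many lattice points. -/
def IsLatticePolytope {n : ℕ} (P : Set (Fin n → ℝ)) : Prop :=
  ∃ V : Set (Fin n → ℝ), V.Finite ∧ (∀ x ∈ V, IsLatticePt x) ∧ P = convexHull ℝ V

/-- The dual polytope `P* = {y : ⟨x, y⟩ ≥ -1 for all x ∈ P}`. -/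
def dualPolytope {n : ℕ} (P : Set (Fin n → ℝ)) : Set (Fin n → ℝ) :=
  {y | ∀ x ∈ P, -1 ≤ dotProd x y}

/-- A reflexive polytope: a lattice polytope containing `0` in its interior
(hence full-dimensional) whose dual is again a lattice polytope. -/
def IsReflexive {n : ℕ} (P : Set (Fin n → ℝ)) : Prop :=
  IsLatticePolytope P ∧ (0 : Fin n → ℝ) ∈ interior P ∧ IsLatticePolytope (dualPolytope P)

/-- A face of a polytope (an exposed face). -/
def IsFaceOf {n : ℕ} (P F : Set (Fin n → ℝ)) : Prop := IsExposed ℝ P F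

/-- A facet: a nonempty face of dimension `n - 1`. -/
def IsFacetOf {n : ℕ} (P F : Set (Fin n → ℝ)) : Prop :=
  IsFaceOf P F ∧ F.Nonempty ∧ Module.finrank ℝ ↥(vectorSpan ℝ F) = n - 1

/-- `Λ_k` : the subgroup of `ℝ^n` generated by all lattice points lying in faces of `P`
of dimension at most `k` (the `k`-skeleton).  It is a subgroup of the lattice `ℤ^n`. -/
def skeletonLattice {n : ℕ} (P : Set (Fin n → ℝ)) (k : ℕ) : AddSubgroup (Fin n → ℝ) :=
  AddSubgroup.closure
    {x | IsLatticePt x ∧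
      ∃ F : Set (Fin n → ℝ), IsFaceOf P F ∧ Module.finrank ℝ ↥(vectorSpan ℝ F) ≤ k ∧ x ∈ F}

/-- The lattice `ℤ^n`, as the subgroup of `ℝ^n` generated by (= consisting of) all
lattice points. -/
def latticeSubgroup (n : ℕ) : AddSubgroup (Fin n → ℝ) :=
  AddSubgroup.closure {x | IsLatticePt x}

/-- `x` is a (Demazure) root of `P` with facet `F` and inner normal `η`:
`x` is a lattice point in the relative interior of the facet `F`, and `η` is the
lattice point with `⟨η, v⟩ = -1` for all `v ∈ F`. -/
def IsRoot {n : ℕ} (P : Set (Fin n → ℝ)) (x : Fin n → ℝ) (F : Set (Fin n → ℝ))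
    (η : Fin n → ℝ) : Prop :=
  IsLatticePt x ∧ IsFacetOf P F ∧ x ∈ intrinsicInterior ℝ F ∧
    IsLatticePt η ∧ ∀ v ∈ F, dotProd η v = -1

/-- The pairing with a fixed vector `w`, as a linear form. -/
def dotLin {n : ℕ} (w : Fin n → ℝ) : (Fin n → ℝ) →ₗ[ℝ] ℝ := dotProductBilin ℝ ℝ w

lemma dotLin_apply {n : ℕ} (w v : Fin n → ℝ) : dotLin w v = dotProd w v := rfl

lemma dotProd_comm {n : ℕ} (v w : Fin n → ℝ) : dotProd v w = dotProd w v :=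
  dotProduct_comm v w

lemma dotProd_add {n : ℕ} (w u v : Fin n → ℝ) :
    dotProd w (u + v) = dotProd w u + dotProd w v :=
  dotProduct_add w u v

lemma dotLin_injective {n : ℕ} {v w : Fin n → ℝ} (h : dotLin v = dotLin w) : v = w :=
  dotProduct_eq v w fun u => LinearMap.congr_fun h u

lemma exists_dotLin_eq {n : ℕ} (f : (Fin n → ℝ) →ₗ[ℝ] ℝ) : ∃ w, f = dotLin w := by
  refine ⟨fun i => f (Pi.single i 1), ?_⟩
  ext i
  simp [dotLin]

lemma IsLatticePt.add {n : ℕ} {x y : Fin n → ℝ} (hx : IsLatticePt x) (hy : IsLatticePt y) :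
    IsLatticePt (x + y) := by
  intro i
  obtain ⟨a, ha⟩ := hx i
  obtain ⟨b, hb⟩ := hy i
  exact ⟨a + b, by simp [ha, hb]⟩

lemma IsLatticePt.dotProd_int {n : ℕ} {x y : Fin n → ℝ} (hx : IsLatticePt x)
    (hy : IsLatticePt y) : ∃ m : ℤ, dotProd x y = m := by
  choose a ha using hx
  choose b hb using hy
  exact ⟨∑ i, a i * b i, by simp [dotProd, ha, hb]⟩

/-- An affine hyperplane at height `-1` misses the origin, so a facet inside it spans `ℝ^n`
linearly; hence linear forms agreeing on the facet are equal. -/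
lemma ext_on_facet {n : ℕ} {F : Set (Fin n → ℝ)} {x η : Fin n → ℝ} (hx : x ∈ F)
    (hd : Module.finrank ℝ ↥(vectorSpan ℝ F) = n - 1) (hη : ∀ v ∈ F, dotProd η v = -1)
    {f g : (Fin n → ℝ) →ₗ[ℝ] ℝ} (hfg : ∀ v ∈ F, f v = g v) : f = g := by
  have key : ∀ h : (Fin n → ℝ) →ₗ[ℝ] ℝ, (∀ v ∈ F, ∀ w ∈ F, h v = h w) →
      vectorSpan ℝ F ≤ LinearMap.ker h := by
    intro h hh
    rw [vectorSpan, Submodule.span_le]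
    rintro _ ⟨v, hv, w, hw, rfl⟩
    simp [hh v hv w hw]
  have hxW : x ∉ vectorSpan ℝ F := by
    intro hmem
    have h0 := key (dotLin η)
      (fun v hv w hw => by rw [dotLin_apply, dotLin_apply, hη v hv, hη w hw]) hmem
    rw [LinearMap.mem_ker, dotLin_apply, hη x hx] at h0
    norm_num at h0
  have htop : vectorSpan ℝ F ⊔ Submodule.span ℝ {x} = ⊤ := by
    apply Submodule.eq_top_of_finrank_eq
    apply le_antisymm (Submodule.finrank_le _)
    have hlt : vectorSpan ℝ F < vectorSpan ℝ F ⊔ Submodule.span ℝ {x} := by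
      refine lt_of_le_of_ne le_sup_left fun he => hxW ?_
      rw [he]
      exact Submodule.mem_sup_right (Submodule.mem_span_singleton_self x)
    have := Submodule.finrank_lt_finrank_of_lt hlt
    rw [Module.finrank_fin_fun]
    omega
  have hker : (⊤ : Submodule ℝ (Fin n → ℝ)) ≤ LinearMap.ker (f - g) := by
    rw [← htop]
    refine sup_le (key _ fun v hv w hw => by simp [hfg v hv, hfg w hw]) ?_
    rw [Submodule.span_singleton_le_iff_mem]
    simp [hfg x hx]
  exact sub_eq_zero.1 (LinearMap.ker_eq_top.1 (top_le_iff.1 hker))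

/-- A linear form attaining its lower bound `-1` at a relative interior point is constant: the
segment from any `v ∈ F` to `x` extends beyond `x` inside `F`. -/
lemma eq_neg_one_of_mem_intrinsicInterior {n : ℕ} {F : Set (Fin n → ℝ)} {x : Fin n → ℝ}
    (hx : x ∈ intrinsicInterior ℝ F) {f : (Fin n → ℝ) →ₗ[ℝ] ℝ} (hf : ∀ v ∈ F, -1 ≤ f v)
    (hfx : f x = -1) : ∀ v ∈ F, f v = -1 := by
  intro v hv
  obtain ⟨x', hx', rfl⟩ := mem_intrinsicInterior.1 hx
  let g : ℝ → affineSpan ℝ F := fun t =>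
    ⟨AffineMap.lineMap (x' : Fin n → ℝ) v t,
      AffineMap.lineMap_mem t x'.2 (subset_affineSpan ℝ F hv)⟩
  have hg : Continuous g := Continuous.subtype_mk AffineMap.lineMap_continuous _
  have hg0 : g 0 = x' := by
    apply Subtype.ext
    simp [g]
  have hev : ∀ᶠ t in nhds (0 : ℝ), (g t : Fin n → ℝ) ∈ F := by
    have h1 : Filter.Tendsto g (nhds 0) (nhds x') := by
      have := hg.tendsto 0
      rwa [hg0] at this
    exact h1 (mem_interior_iff_mem_nhds.1 hx')
  obtain ⟨ε, hε, hball⟩ := Metric.eventually_nhds_iff.1 hev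
  have hmem := hball (y := -(ε / 2)) (by
    rw [Real.dist_eq, sub_zero, abs_neg, abs_of_pos (by linarith)]
    linarith)
  have h2 := hf _ hmem
  simp only [g, AffineMap.lineMap_apply, vsub_eq_sub, vadd_eq_add, map_add, map_smul, map_sub,
    smul_eq_mul, hfx] at h2
  have h3 := hf v hv
  nlinarith

/-- The bipolar theorem in the form `P** ⊆ P`, tested only on generators of `P*`. -/
lemma mem_of_forall_dual {n : ℕ} {P V : Set (Fin n → ℝ)} (hc : Convex ℝ P) (hcl : IsClosed P)
    (h0 : (0 : Fin n → ℝ) ∈ P) (hV : dualPolytope P = convexHull ℝ V) {p : Fin n → ℝ}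
    (hp : ∀ w ∈ V, -1 ≤ dotProd w p) : p ∈ P := by
  by_contra hpP
  obtain ⟨f, u, hfu, hup⟩ := geometric_hahn_banach_closed_point hc hcl hpP
  have hu : 0 < u := by simpa using hfu 0 h0
  obtain ⟨w, hw⟩ := exists_dotLin_eq (-(u⁻¹ • (f : (Fin n → ℝ) →ₗ[ℝ] ℝ)))
  have hwv : ∀ v, dotProd w v = -(u⁻¹ * f v) := fun v => by
    rw [← dotLin_apply, ← hw]
    simp
  have hwd : w ∈ dualPolytope P := by
    intro v hv
    rw [dotProd_comm, hwv, neg_le_neg_iff, inv_mul_le_one₀ hu]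
    exact (hfu v hv).le
  rw [hV] at hwd
  have hsub : convexHull ℝ V ⊆ {w | -1 ≤ dotLin p w} :=
    convexHull_min (fun v hv => by
      simpa [dotLin_apply, dotProd_comm p] using hp v hv)
      (convex_halfSpace_ge (dotLin p).isLinear (-1))
  have h1 : -1 ≤ dotLin p w := hsub hwd
  rw [dotLin_apply, dotProd_comm, hwv, neg_le_neg_iff, inv_mul_le_one₀ hu] at h1
  linarith

/-- A point of `P*` that is `-1` at a root is the normal of that root. -/
lemma eq_normal {n : ℕ} {P F : Set (Fin n → ℝ)} {x η w : Fin n → ℝ} (hx : IsRoot P x F η)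
    (hw : w ∈ dualPolytope P) (h : dotProd w x = -1) : w = η := by
  obtain ⟨-, ⟨hF, -, hd⟩, hxi, -, hη⟩ := hx
  have hc := eq_neg_one_of_mem_intrinsicInterior (f := dotLin w) hxi
    (fun v hv => by
      rw [dotLin_apply, dotProd_comm]
      exact hw v (hF.subset hv)) h
  exact dotLin_injective (ext_on_facet (intrinsicInterior_subset hxi) hd hη
    fun v hv => (hc v hv).trans (hη v hv).symm)

lemma eq_normal_or_nonneg {n : ℕ} {P F : Set (Fin n → ℝ)} {x η w : Fin n → ℝ}
    (hx : IsRoot P x F η) (hw : w ∈ dualPolytope P) (hwl : IsLatticePt w) :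
    w = η ∨ 0 ≤ dotProd w x := by
  obtain ⟨m, hm⟩ := hwl.dotProd_int hx.1
  have h1 : -1 ≤ dotProd w x := by
    rw [dotProd_comm]
    exact hw x (hx.2.1.1.subset (intrinsicInterior_subset hx.2.2.1))
  rw [hm] at h1
  have h2 : -1 ≤ m := by exact_mod_cast h1
  rcases h2.eq_or_lt with h | h
  · left
    refine eq_normal hx hw ?_
    rw [hm, ← h]
    norm_num
  · right
    rw [hm]
    exact_mod_cast (by omega : 0 ≤ m)

lemma mem_facet {n : ℕ} {P F : Set (Fin n → ℝ)} {x η p : Fin n → ℝ} (hx : IsRoot P x F η)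
    (hp : p ∈ P) (h : dotProd η p = -1) : p ∈ F := by
  obtain ⟨-, ⟨hF, -, hd⟩, hxi, -, hη⟩ := hx
  have hxF := intrinsicInterior_subset hxi
  obtain ⟨l, rfl⟩ := hF ⟨x, hxF⟩
  -- the exposing functional is constant on the facet, so it is proportional to `η`
  have hl : (l : (Fin n → ℝ) →ₗ[ℝ] ℝ) = -(l x) • dotLin η := by
    refine ext_on_facet hxF hd hη fun v hv => ?_
    have : l v = l x := le_antisymm (hxF.2 v hv.1) (hv.2 x hxF.1)
    simp [dotLin_apply, hη v hv, this]
  have hlp : l p = l x := by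
    have := LinearMap.congr_fun hl p
    simpa [dotLin_apply, h] using this
  exact ⟨hp, fun v hv => hlp ▸ hxF.2 v hv⟩

/-- If `x, y` is an orthogonal pair of roots of a reflexive polytope `P`
(`⟨ηₓ, y⟩ = 0 = ⟨η_y, x⟩`), then `x + y` is a lattice point lying in `Fₓ ∩ F_y`. -/
theorem orthogonal_roots_sum_mem {n : ℕ} (P : Set (Fin n → ℝ)) (hP : IsReflexive P)
    (x Fx ηx : _) (hx : IsRoot P x Fx ηx)
    (y Fy ηy : _) (hy : IsRoot P y Fy ηy)
    (hxy : dotProd ηx y = 0) (hyx : dotProd ηy x = 0) :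
    IsLatticePt (x + y) ∧ x + y ∈ Fx ∩ Fy := by
  obtain ⟨⟨U, hUf, -, hU⟩, h0, V, -, hVl, hV⟩ := hP
  have hc : Convex ℝ P := hU ▸ convex_convexHull ℝ U
  have hcl : IsClosed P := hU ▸ (hUf.isCompact_convexHull ℝ).isClosed
  have hηx : dotProd ηx x = -1 := hx.2.2.2.2 x (intrinsicInterior_subset hx.2.2.1)
  have hηy : dotProd ηy y = -1 := hy.2.2.2.2 y (intrinsicInterior_subset hy.2.2.1)
  have hmem : x + y ∈ P := by
    refine mem_of_forall_dual hc hcl (interior_subset h0) hV fun w hw => ?_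
    have hwd : w ∈ dualPolytope P := hV ▸ subset_convexHull ℝ V hw
    rw [dotProd_add]
    rcases eq_normal_or_nonneg hx hwd (hVl w hw) with rfl | h1
    · rw [hηx, hxy]
      norm_num
    · rcases eq_normal_or_nonneg hy hwd (hVl w hw) with rfl | h2
      · rw [hηy, hyx]
        norm_num
      · linarith
  refine ⟨hx.1.add hy.1, mem_facet hx hmem ?_, mem_facet hy hmem ?_⟩
  · rw [dotProd_add, hηx, hxy, add_zero]
  · rw [dotProd_add, hηy, hyx, zero_add]
end

section
/- Let P ⊆ ℝ³ be a 3-dimensional reflexive polytope with respect to ℤ³. Then the lattice points of ℤ³ lying on the boundary of P generate the full lattice ℤ³, i.e., Λ_2 = ℤ³. -/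
lemma dotProd_eq_dotProduct {n : ℕ} (x y : Fin n → ℝ) : dotProd x y = x ⬝ᵥ y := rfl

lemma IsLatticePt.sub {n : ℕ} {x y : Fin n → ℝ} (hx : IsLatticePt x) (hy : IsLatticePt y) :
    IsLatticePt (x - y) := fun i => by
  obtain ⟨a, ha⟩ := hx i
  obtain ⟨b, hb⟩ := hy i
  exact ⟨a - b, by simp [ha, hb]⟩

lemma IsLatticePt.zsmul {n : ℕ} {x : Fin n → ℝ} (m : ℤ) (hx : IsLatticePt x) :
    IsLatticePt ((m : ℝ) • x) := fun i => by
  obtain ⟨a, ha⟩ := hx i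
  exact ⟨m * a, by simp [ha]⟩

lemma isLatticePt_sum {n : ℕ} {ι : Type*} (s : Finset ι) (f : ι → Fin n → ℝ)
    (hf : ∀ i ∈ s, IsLatticePt (f i)) : IsLatticePt (∑ i ∈ s, f i) := by
  induction s using Finset.cons_induction with
  | empty => exact fun i => ⟨0, by simp⟩
  | cons a s ha ih =>
    rw [Finset.sum_cons]
    exact (hf a (by simp)).add (ih fun i hi => hf i (by simp [hi]))

lemma det_int {n : ℕ} (A : Matrix (Fin n) (Fin n) ℝ) (hA : ∀ i, IsLatticePt (A i)) :
    ∃ m : ℤ, A.det = m := by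
  choose B hB using hA
  refine ⟨(Matrix.of B).det, ?_⟩
  have : A = (Matrix.of B).map (Int.cast : ℤ → ℝ) := by
    ext i j
    simp [hB]
  rw [this, Int.cast_det]

lemma dotProd_sum_smul {n : ℕ} {ι : Type*} [Fintype ι] (w : ι → ℝ) (A : ι → Fin n → ℝ)
    (η : Fin n → ℝ) (hA : ∀ i, dotProd (A i) η = -1) :
    dotProd (∑ i, w i • A i) η = -∑ i, w i := by
  simp only [dotProd_eq_dotProduct] at *
  simp [sum_dotProduct, smul_dotProduct, hA]

/-- A lattice point of the triangle spanned by the rows of `A`, other than its vertices, can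
replace one of the vertices so that the determinant stays nonzero and decreases strictly in
absolute value. -/
lemma exists_smaller_triple {K : Set (Fin 3 → ℝ)} (hK : Convex ℝ K) {η : Fin 3 → ℝ}
    (A : Matrix (Fin 3) (Fin 3) ℝ) (hl : ∀ i, IsLatticePt (A i)) (hA : ∀ i, A i ∈ K)
    (hη : ∀ i, dotProd (A i) η = -1) (hdet : A.det ≠ 0) (w : Fin 3 → ℝ)
    (h0 : ∀ i, 0 ≤ w i) (h1 : ∀ i, w i < 1) (hs : ∑ i, w i = 1)
    (hy : IsLatticePt (∑ i, w i • A i)) :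
    ∃ B : Matrix (Fin 3) (Fin 3) ℝ, (∀ i, IsLatticePt (B i)) ∧ (∀ i, B i ∈ K) ∧
      (∀ i, dotProd (B i) η = -1) ∧ B.det ≠ 0 ∧ |B.det| < |A.det| := by
  obtain ⟨k, hk⟩ : ∃ k, 0 < w k := by
    by_contra! h
    have := Finset.sum_nonpos fun i (_ : i ∈ Finset.univ) => h i
    linarith
  have hd : (A.updateRow k (∑ i, w i • A i)).det = w k * A.det := by
    simpa using Matrix.det_updateRow_sum A k w
  refine ⟨A.updateRow k (∑ i, w i • A i), fun i => ?_, fun i => ?_, fun i => ?_, ?_, ?_⟩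
  · rcases eq_or_ne i k with rfl | h
    · rwa [Matrix.updateRow_self]
    · rw [Matrix.updateRow_ne h]; exact hl i
  · rcases eq_or_ne i k with rfl | h
    · rw [Matrix.updateRow_self]
      exact hK.sum_mem (fun i _ => h0 i) hs fun i _ => hA i
    · rw [Matrix.updateRow_ne h]; exact hA i
  · rcases eq_or_ne i k with rfl | h
    · rw [Matrix.updateRow_self, dotProd_sum_smul w A η hη, hs]
    · rw [Matrix.updateRow_ne h]; exact hη i
  · rw [hd]; exact mul_ne_zero hk.ne' hdet
  · rw [hd, abs_mul, abs_of_pos hk]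
    exact mul_lt_of_lt_one_left (abs_pos.mpr hdet) (h1 k)

/-- If a convex set `K` contains three linearly independent lattice points on the hyperplane
`⟨·, η⟩ = -1`, with `η` integral, then the lattice points of `K` on this hyperplane
generate `ℤ³`. The induction is on a bound for the determinant of the triple. -/
lemma mem_closure_facet {K : Set (Fin 3 → ℝ)} (hK : Convex ℝ K) {η : Fin 3 → ℝ}
    (hηl : IsLatticePt η) {x : Fin 3 → ℝ} (hx : IsLatticePt x) (n : ℕ) :
    ∀ A : Matrix (Fin 3) (Fin 3) ℝ, (∀ i, IsLatticePt (A i)) → (∀ i, A i ∈ K) →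
      (∀ i, dotProd (A i) η = -1) → A.det ≠ 0 → |A.det| ≤ n →
      x ∈ AddSubgroup.closure {y | IsLatticePt y ∧ y ∈ K ∧ dotProd y η = -1} := by
  induction n with
  | zero =>
    intro A _ _ _ hd hn
    exact absurd (by simpa using hn) hd
  | succ n ih =>
    intro A hl hA hη hdet hn
    -- Determinants of integral matrices are integers, so a strict decrease is one by at least 1.
    have descend : (∃ B : Matrix (Fin 3) (Fin 3) ℝ, (∀ i, IsLatticePt (B i)) ∧ (∀ i, B i ∈ K) ∧
        (∀ i, dotProd (B i) η = -1) ∧ B.det ≠ 0 ∧ |B.det| < |A.det|) →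
        x ∈ AddSubgroup.closure {y | IsLatticePt y ∧ y ∈ K ∧ dotProd y η = -1} := by
      rintro ⟨B, hB1, hB2, hB3, hB4, hB5⟩
      refine ih B hB1 hB2 hB3 hB4 ?_
      obtain ⟨m, hm⟩ := det_int B hB1
      have h := hB5.trans_le hn
      rw [hm] at h ⊢
      have h' : |m| < (n : ℤ) + 1 := by exact_mod_cast h
      exact_mod_cast Int.lt_add_one_iff.mp h'
    set c : Fin 3 → ℝ := Matrix.vecMul x A⁻¹ with hc
    have hxc : x = ∑ i, c i • A i := by
      rw [← Matrix.vecMul_eq_sum, hc, Matrix.vecMul_vecMul,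
        Matrix.nonsing_inv_mul _ (isUnit_iff_ne_zero.mpr hdet), Matrix.vecMul_one]
    set w : Fin 3 → ℝ := fun i => Int.fract (c i) with hw
    have h0 : ∀ i, 0 ≤ w i := fun i => Int.fract_nonneg _
    have h1 : ∀ i, w i < 1 := fun i => Int.fract_lt_one _
    have hfl : IsLatticePt (∑ i, (⌊c i⌋ : ℝ) • A i) :=
      isLatticePt_sum _ _ fun i _ => (hl i).zsmul _
    have hxw : x = ∑ i, (⌊c i⌋ : ℝ) • A i + ∑ i, w i • A i := by
      rw [← Finset.sum_add_distrib]
      simp only [hw, ← add_smul, Int.floor_add_fract]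
      exact hxc
    have hy : IsLatticePt (∑ i, w i • A i) := by
      have := hx.sub hfl
      rwa [hxw, add_sub_cancel_left] at this
    obtain ⟨m, hm⟩ := hy.dotProd_int hηl
    rw [dotProd_sum_smul w A η hη] at hm
    have e : ∑ i, w i = w 0 + w 1 + w 2 := Fin.sum_univ_three w
    have hm0 : m ≤ 0 := by
      have : (m : ℝ) ≤ 0 := by linarith [h0 0, h0 1, h0 2]
      exact_mod_cast this
    have hm3 : -3 < m := by
      have : (-3 : ℝ) < m := by linarith [h1 0, h1 1, h1 2]
      exact_mod_cast this
    obtain rfl | rfl | rfl : m = 0 ∨ m = -1 ∨ m = -2 := by omega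
    · have hz : ∀ i, w i = 0 := by
        have : ∑ i, w i = 0 := by simpa using hm
        simpa using (Finset.sum_eq_zero_iff_of_nonneg fun i _ => h0 i).mp this
      rw [hxw]
      simp only [hz, zero_smul, Finset.sum_const_zero, add_zero]
      refine AddSubgroup.sum_mem _ fun i _ => ?_
      rw [Int.cast_smul_eq_zsmul]
      exact AddSubgroup.zsmul_mem _ (AddSubgroup.mem_closure_of_mem (by exact ⟨hl i, hA i, hη i⟩)) _
    · refine descend (exists_smaller_triple hK A hl hA hη hdet w h0 h1 ?_ hy)
      push_cast at hm
      linarith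
    · push_cast at hm
      -- As each weight is below 1 and their sum is 2, no weight vanishes.
      refine descend (exists_smaller_triple hK A hl hA hη hdet (fun i => 1 - w i)
        (fun i => by linarith [h1 i]) (fun i => ?_) ?_ ?_)
      · have := h1 0
        have := h1 1
        have := h1 2
        fin_cases i <;> simp <;> linarith
      · rw [Fin.sum_univ_three]
        linarith
      · have := (isLatticePt_sum Finset.univ _ fun i _ => hl i).sub hy
        convert this using 1
        ext j
        simp [sub_mul, Finset.sum_sub_distrib]
        exact (Finset.sum_apply j Finset.univ A).symm

/-- At a vertex `η` of the dual polytope the active constraints span, which yields a lattice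
normal `η` and three independent lattice points of `P` on `⟨·, η⟩ = -1`. -/
lemma exists_facet_triple {P : Set (Fin 3 → ℝ)} (hP : IsReflexive P) :
    ∃ η ∈ dualPolytope P, IsLatticePt η ∧ ∃ A : Matrix (Fin 3) (Fin 3) ℝ,
      (∀ i, IsLatticePt (A i)) ∧ (∀ i, A i ∈ P) ∧ (∀ i, dotProd (A i) η = -1) ∧ A.det ≠ 0 := by
  obtain ⟨⟨V, hVf, hVl, hPV⟩, -, W, hWf, hWl, hW⟩ := hP
  have hVP : V ⊆ P := hPV ▸ subset_convexHull ℝ V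
  have hcomp : IsCompact (dualPolytope P) := by
    rw [hW]
    exact hWf.isCompact_convexHull ℝ
  obtain ⟨η, hη⟩ := hcomp.extremePoints_nonempty ⟨0, fun x _ => by simp [dotProd]⟩
  have hηl : IsLatticePt η := by
    rw [hW] at hη
    exact hWl _ (extremePoints_convexHull_subset hη)
  have hdual : ∀ y, (∀ v ∈ V, -1 ≤ v ⬝ᵥ y) → y ∈ dualPolytope P := by
    intro y hy x hx
    have hconv : Convex ℝ {x : Fin 3 → ℝ | -1 ≤ x ⬝ᵥ y} :=
      convex_halfSpace_ge
        ⟨fun a b => add_dotProduct a b y, fun r a => smul_dotProduct r a y⟩ _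
    rw [hPV] at hx
    exact convexHull_min hy hconv hx
  refine ⟨η, hη.1, hηl, ?_⟩
  set S : Set (Fin 3 → ℝ) := {v | v ∈ V ∧ v ⬝ᵥ η = -1} with hS
  have hspan : Submodule.span ℝ S = ⊤ := by
    by_contra hne
    obtain ⟨f, hf0, hf⟩ := Submodule.exists_le_ker_of_lt_top _ (lt_top_iff_ne_top.mpr hne)
    obtain ⟨u, hu⟩ : ∃ u : Fin 3 → ℝ, ∀ v, f v = v ⬝ᵥ u :=
      ⟨fun i => f (Pi.single i 1), fun v => by
        rw [f.pi_apply_eq_sum_univ v]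
        simp only [dotProduct, smul_eq_mul]
        refine Finset.sum_congr rfl fun i _ => ?_
        congr 2
        ext j
        simp [Pi.single_apply, eq_comm]⟩
    have hu0 : u ≠ 0 := by
      rintro rfl
      exact hf0 (LinearMap.ext fun v => by simp [hu])
    -- Inactive constraints have positive slack, so `η ± ε u` stays in the dual for small `ε`.
    have hev : ∀ v ∈ V, ∀ᶠ ε in nhdsWithin (0 : ℝ) (Set.Ioi 0),
        -1 ≤ v ⬝ᵥ (η + ε • u) ∧ -1 ≤ v ⬝ᵥ (η - ε • u) := by
      intro v hv
      simp only [dotProduct_add, dotProduct_sub, dotProduct_smul, smul_eq_mul]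
      have hle : -1 ≤ v ⬝ᵥ η := hη.1 v (hVP hv)
      rcases hle.eq_or_lt with h | h
      · have hz : v ⬝ᵥ u = 0 := by
          rw [← hu]
          exact hf (Submodule.subset_span ⟨hv, h.symm⟩)
        simp [hz, hle]
      · apply Filter.Eventually.filter_mono nhdsWithin_le_nhds
        have h1 : Filter.Tendsto (fun ε : ℝ => v ⬝ᵥ η + ε * (v ⬝ᵥ u)) (nhds 0)
            (nhds (v ⬝ᵥ η)) := by
          have : Continuous (fun ε : ℝ => v ⬝ᵥ η + ε * (v ⬝ᵥ u)) := by fun_prop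
          simpa using this.tendsto 0
        have h2 : Filter.Tendsto (fun ε : ℝ => v ⬝ᵥ η - ε * (v ⬝ᵥ u)) (nhds 0)
            (nhds (v ⬝ᵥ η)) := by
          have : Continuous (fun ε : ℝ => v ⬝ᵥ η - ε * (v ⬝ᵥ u)) := by fun_prop
          simpa using this.tendsto 0
        exact (h1.eventually_const_le h).and (h2.eventually_const_le h)
    obtain ⟨ε, hε, hε0⟩ :=
      (((Filter.eventually_all_finite hVf).mpr hev).and self_mem_nhdsWithin).exists
    have hmid : η ∈ openSegment ℝ (η + ε • u) (η - ε • u) :=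
      ⟨1 / 2, 1 / 2, by norm_num, by norm_num, by norm_num, by module⟩
    have := hη.2 (hdual _ fun v hv => (hε v hv).1) (hdual _ fun v hv => (hε v hv).2) hmid
    have hεu : ε • u = 0 := by simpa using this
    exact (smul_ne_zero (ne_of_gt hε0) hu0) hεu
  obtain ⟨A, hAS, -, hli⟩ := Submodule.exists_fun_fin_finrank_span_eq ℝ S
  have h3 : 3 = Module.finrank ℝ (Submodule.span ℝ S) := by
    rw [hspan, finrank_top, Module.finrank_fin_fun]
  let B : Matrix (Fin 3) (Fin 3) ℝ := fun i => A (Fin.cast h3 i)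
  have hB : ∀ i, B i ∈ S := fun i => hAS _
  refine ⟨B, fun i => hVl _ (hB i).1, fun i => hVP (hB i).1, fun i => (hB i).2, ?_⟩
  have hliB : LinearIndependent ℝ B.row := hli.comp _ (Fin.cast_injective h3)
  exact ((Matrix.isUnit_iff_isUnit_det B).mp
    (Matrix.linearIndependent_rows_iff_isUnit.mp hliB)).ne_zero

/-- A point where a dual inequality is tight is a boundary point: scaling it up by any factor
`> 1` leaves `P`. -/
lemma mem_frontier_of_dotProd_eq {n : ℕ} {P : Set (Fin n → ℝ)} {x η : Fin n → ℝ}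
    (hη : η ∈ dualPolytope P) (hx : x ∈ P) (h : dotProd x η = -1) : x ∈ frontier P := by
  refine ⟨subset_closure hx, fun hint => ?_⟩
  have hcont : Filter.Tendsto (fun t : ℝ => t • x) (nhdsWithin 1 (Set.Ioi 1)) (nhds x) := by
    have : Continuous (fun t : ℝ => t • x) := by fun_prop
    simpa using (this.tendsto 1).mono_left nhdsWithin_le_nhds
  obtain ⟨t, ht, ht1⟩ :=
    ((hcont.eventually (mem_interior_iff_mem_nhds.mp hint)).and self_mem_nhdsWithin).exists
  have h2 := hη _ ht
  rw [dotProd_eq_dotProduct, smul_dotProduct, ← dotProd_eq_dotProduct, h, smul_eq_mul] at h2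
  have : (1 : ℝ) < t := ht1
  linarith

/-- For a `3`-dimensional reflexive polytope `P ⊆ ℝ³`, the lattice points on the boundary
of `P` generate the full lattice `ℤ³`: `Λ₂ = ℤ³`. -/
theorem reflexive_threefold_boundary_generates (P : Set (Fin 3 → ℝ))
    (hP : IsReflexive P) :
    AddSubgroup.closure {x : Fin 3 → ℝ | IsLatticePt x ∧ x ∈ frontier P} =
      latticeSubgroup 3 := by
  refine le_antisymm (AddSubgroup.closure_mono fun x hx => hx.1) ?_
  obtain ⟨η, hη, hηl, A, hl, hA, hAη, hdet⟩ := exists_facet_triple hP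
  have hconv : Convex ℝ P := by
    obtain ⟨⟨V, -, -, rfl⟩, -⟩ := hP
    exact convex_convexHull ℝ V
  refine (AddSubgroup.closure_le _).mpr fun x hx => ?_
  obtain ⟨N, hN⟩ := exists_nat_ge |A.det|
  refine AddSubgroup.closure_mono ?_ (mem_closure_facet hconv hηl hx N A hl hA hAη hdet hN)
  exact fun y hy => ⟨hy.1, mem_frontier_of_dotProd_eq hη hy.2.1 hy.2.2⟩
end
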